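/- arXiv:2312.07610 — 4 statements merged into one kernel-verified Lean document; each statement's English description precedes it below -/
import Mathlib

section
/- Identification of randomized interventional analogue means under model M1: under consistency, positivity, A1.1' and A1.2, for all a, a* ∈ {0,1} one has Σ_m E[Y^{a,m}]·P(M^{a*}=m) = Ψ_RDE(P; a, a*). In particular, the randomized interventional analogue of the natural direct effect, γ_RDE := Σ_m E[Y^{1,m}]·P(M^{0}=m) − Σ_m E[Y^{0,m}]·P(M^{0}=m), equals Ψ_RDE(P; 1, 0) − Ψ_RDE(P; 0, 0), a functional of the observed-data distribution alone. -/
open Classical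

noncomputable section

/-- Probability of the event `S` under the probability mass function `P`
on a finite sample space. -/
def pr {Ω : Type} [Fintype Ω] (P : Ω → ℝ) (S : Ω → Prop) : ℝ :=
  ∑ ω, if S ω then P ω else 0

/-- Conditional probability of `S` given `T`, with the convention that it is `0`
when the conditioning event is null (in Lean, `x / 0 = 0`). -/
def cpr {Ω : Type} [Fintype Ω] (P : Ω → ℝ) (S T : Ω → Prop) : ℝ :=
  pr P (fun ω => S ω ∧ T ω) / pr P T

/-- Expectation of `X` under `P`. -/
def expec {Ω : Type} [Fintype Ω] (P : Ω → ℝ) (X : Ω → ℝ) : ℝ :=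
  ∑ ω, X ω * P ω

/-- Conditional expectation of `X` given the event `T`, with the convention that
it is `0` when the conditioning event is null. -/
def cexp {Ω : Type} [Fintype Ω] (P : Ω → ℝ) (X : Ω → ℝ) (T : Ω → Prop) : ℝ :=
  (∑ ω, if T ω then X ω * P ω else 0) / pr P T

/-- The functional `Ψ_RDE(P; a, a*)
  = Σ_m Σ_w E[Y | M=m, W=w, A=a] · P(M=m | A=a*) · P(W=w | A=a)`. -/
def psiRDE {Ω Wt Mt : Type} [Fintype Ω] [Fintype Wt] [Fintype Mt]
    (P : Ω → ℝ) (A : Ω → Fin 2) (W : Ω → Wt) (M : Ω → Mt) (Y : Ω → ℝ)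
    (a astar : Fin 2) : ℝ :=
  ∑ m, ∑ w,
    cexp P Y (fun ω => M ω = m ∧ W ω = w ∧ A ω = a)
      * cpr P (fun ω => M ω = m) (fun ω => A ω = astar)
      * cpr P (fun ω => W ω = w) (fun ω => A ω = a)

/-!
Since `Y^{a,m}` is independent of `A`, its mean may be computed on `{A = a}`, where it is averaged
over `W`. Given `W = w` and `A = a`, A1.2 allows conditioning further on `M^a = m`, and there
consistency turns `M^a` into `M` and `Y^{a,m}` into `Y`. This gives the g-formula
`E[Y^{a,m}] = Σ_w E[Y | M=m, W=w, A=a] · P(W=w | A=a)`. In the same way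
`P(M^{a*}=m) = P(M=m | A=a*)`.
-/

/-- The expectation `E[X · 1_T]` of `X` over the event `T`, without normalization: the numerator
of `cexp`. -/
def partialExpec {Ω : Type} [Fintype Ω] (P X : Ω → ℝ) (T : Ω → Prop) : ℝ :=
  ∑ ω, if T ω then X ω * P ω else 0

/-- Independence of the random variable `V` and the event `T`, stated through the atoms of the law
of `V`, which suffices on a finite sample space. -/
def IndepOfEvent {Ω : Type} {S : Type*} [Fintype Ω] (P : Ω → ℝ) (V : Ω → S) (T : Ω → Prop) :
    Prop :=
  ∀ v, pr P (fun ω => V ω = v ∧ T ω) = pr P (fun ω => V ω = v) * pr P T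

/-- Conditional independence of the random variable `V` and the event `T` given the event `C`,
stated through the atoms of the law of `V`. -/
def CondIndepOfEvent {Ω : Type} {S : Type*} [Fintype Ω] (P : Ω → ℝ) (V : Ω → S)
    (T C : Ω → Prop) : Prop :=
  ∀ v, cpr P (fun ω => V ω = v ∧ T ω) C = cpr P (fun ω => V ω = v) C * cpr P T C

section FiniteProbability

variable {Ω : Type} {S R : Type*} [Fintype Ω] {P X Z : Ω → ℝ} {T U C : Ω → Prop} {V : Ω → S}

lemma cexp_eq_partialExpec_div (P X : Ω → ℝ) (T : Ω → Prop) :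
    cexp P X T = partialExpec P X T / pr P T :=
  rfl

lemma partialExpec_true (P X : Ω → ℝ) : partialExpec P X (fun _ => True) = expec P X := by
  simp only [partialExpec, expec, if_true]

lemma partialExpec_indicator (P : Ω → ℝ) (U T : Ω → Prop) :
    partialExpec P (fun ω => if U ω then 1 else 0) T = pr P (fun ω => U ω ∧ T ω) := by
  refine Finset.sum_congr rfl fun ω _ => ?_
  by_cases hT : T ω <;> by_cases hU : U ω <;> simp [hT, hU]

lemma pr_congr (h : ∀ ω, T ω ↔ U ω) : pr P T = pr P U :=
  congrArg (pr P) (funext fun ω => propext (h ω))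

lemma cexp_congr (hTU : ∀ ω, T ω ↔ U ω) (hXZ : ∀ ω, T ω → X ω = Z ω) :
    cexp P X T = cexp P Z U := by
  obtain rfl : T = U := funext fun ω => propext (hTU ω)
  have hpartial : partialExpec P X T = partialExpec P Z T :=
    Finset.sum_congr rfl fun ω _ => ite_congr rfl (fun hT => by rw [hXZ ω hT]) fun _ => rfl
  rw [cexp_eq_partialExpec_div, cexp_eq_partialExpec_div, hpartial]

lemma pr_ne_zero_of_cpr_ne_zero (h : cpr P U T ≠ 0) : pr P T ≠ 0 :=
  (div_ne_zero_iff.mp h).2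

lemma partialExpec_comp_eq_sum_image (P : Ω → ℝ) (V : Ω → S) (g : S → ℝ) (T : Ω → Prop) :
    partialExpec P (g ∘ V) T
      = ∑ v ∈ Finset.univ.image V, g v * pr P (fun ω => V ω = v ∧ T ω) := by
  simp only [pr, Finset.mul_sum]
  rw [Finset.sum_comm]
  refine Finset.sum_congr rfl fun ω _ => ?_
  by_cases hT : T ω <;> simp [hT]

lemma partialExpec_comp_eq_mul {c : ℝ}
    (h : ∀ v, pr P (fun ω => V ω = v ∧ T ω) = c * pr P (fun ω => V ω = v ∧ U ω)) (g : S → ℝ) :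
    partialExpec P (g ∘ V) T = c * partialExpec P (g ∘ V) U := by
  simp only [partialExpec_comp_eq_sum_image, h, Finset.mul_sum, mul_left_comm]

lemma partialExpec_eq_sum_fiber {ι : Type*} [Fintype ι] (P X : Ω → ℝ) (W : Ω → ι)
    (T : Ω → Prop) :
    partialExpec P X T = ∑ w, partialExpec P X (fun ω => W ω = w ∧ T ω) := by
  simp only [partialExpec]
  rw [Finset.sum_comm]
  refine Finset.sum_congr rfl fun ω _ => ?_
  by_cases hT : T ω <;> simp [hT]

lemma cexp_eq_sum_cexp_mul_cpr {ι : Type*} [Fintype ι] {W : Ω → ι}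
    (hW : ∀ w, pr P (fun ω => W ω = w ∧ T ω) ≠ 0) :
    cexp P X T
      = ∑ w, cexp P X (fun ω => W ω = w ∧ T ω) * cpr P (fun ω => W ω = w) T := by
  rw [cexp_eq_partialExpec_div, partialExpec_eq_sum_fiber P X W, Finset.sum_div]
  exact Finset.sum_congr rfl fun w _ => (div_mul_div_cancel₀ (hW w)).symm

namespace IndepOfEvent

lemma partialExpec_comp (h : IndepOfEvent P V T) (g : S → ℝ) :
    partialExpec P (g ∘ V) T = pr P T * expec P (g ∘ V) := by
  rw [← partialExpec_true]
  refine partialExpec_comp_eq_mul (fun v => ?_) g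
  simp only [and_true]
  rw [h v, mul_comm]

lemma comp (h : IndepOfEvent P V T) (f : S → R) : IndepOfEvent P (f ∘ V) T := by
  intro r
  have hatom := h.partialExpec_comp fun v => if f v = r then 1 else 0
  rw [← partialExpec_true] at hatom
  simpa only [Function.comp_def, partialExpec_indicator, and_true, mul_comm] using hatom

lemma cexp_eq_expec (h : IndepOfEvent P X T) (hT : pr P T ≠ 0) : cexp P X T = expec P X := by
  rw [cexp_eq_partialExpec_div, div_eq_iff hT, mul_comm]
  exact h.partialExpec_comp id

lemma cpr_eq_pr (h : IndepOfEvent P V T) (hT : pr P T ≠ 0) (v : S) :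
    cpr P (fun ω => V ω = v) T = pr P (fun ω => V ω = v) := by
  rw [cpr, h v, mul_div_cancel_right₀ _ hT]

end IndepOfEvent

lemma CondIndepOfEvent.cexp_and_eq (h : CondIndepOfEvent P X T C) (hT : cpr P T C ≠ 0) :
    cexp P X (fun ω => T ω ∧ C ω) = cexp P X C := by
  have hC : pr P C ≠ 0 := pr_ne_zero_of_cpr_ne_zero hT
  have hatom (x : ℝ) :
      pr P (fun ω => X ω = x ∧ T ω ∧ C ω) = cpr P T C * pr P (fun ω => X ω = x ∧ C ω) := by
    have hx := h x
    rw [cpr, cpr, div_mul_eq_mul_div, div_left_inj' hC, mul_comm] at hx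
    simpa only [and_assoc] using hx
  have hpartial : partialExpec P X (fun ω => T ω ∧ C ω) = cpr P T C * partialExpec P X C :=
    partialExpec_comp_eq_mul hatom id
  have hTC : pr P (fun ω => T ω ∧ C ω) = cpr P T C * pr P C := (div_mul_cancel₀ _ hC).symm
  rw [cexp_eq_partialExpec_div, hpartial, hTC, mul_div_mul_left _ _ hT, cexp_eq_partialExpec_div]

end FiniteProbability

section Identification

variable {Ω : Type} {Wt Mt : Type*} [Fintype Ω] {P : Ω → ℝ} {T : Ω → Prop} {M Mcf : Ω → Mt}

lemma cpr_observed_eq_pr_counterfactual (hcons : ∀ ω, T ω → Mcf ω = M ω)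
    (hindep : IndepOfEvent P Mcf T) (hT : pr P T ≠ 0) (m : Mt) :
    cpr P (fun ω => M ω = m) T = pr P (fun ω => Mcf ω = m) := by
  rw [← hindep.cpr_eq_pr hT m, cpr, cpr]
  congr 1
  exact pr_congr fun ω => and_congr_left fun hω => by rw [hcons ω hω]

lemma expec_counterfactual_eq_sum_cexp_mul_cpr [Fintype Wt] {W : Ω → Wt} {Y Ycf : Ω → ℝ} {m : Mt}
    (hconsM : ∀ ω, T ω → Mcf ω = M ω) (hconsY : ∀ ω, T ω → M ω = m → Ycf ω = Y ω)
    (hT : pr P T ≠ 0) (hM : ∀ w, cpr P (fun ω => M ω = m) (fun ω => W ω = w ∧ T ω) ≠ 0)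
    (hindep : IndepOfEvent P Ycf T)
    (hcond : ∀ w, CondIndepOfEvent P Ycf (fun ω => Mcf ω = m) (fun ω => W ω = w ∧ T ω)) :
    expec P Ycf
      = ∑ w, cexp P Y (fun ω => M ω = m ∧ W ω = w ∧ T ω) * cpr P (fun ω => W ω = w) T := by
  have hevent (w : Wt) (ω : Ω) :
      (Mcf ω = m ∧ W ω = w ∧ T ω) ↔ (M ω = m ∧ W ω = w ∧ T ω) :=
    and_congr_left fun hω => by rw [hconsM ω hω.2]
  have hMcf (w : Wt) : cpr P (fun ω => Mcf ω = m) (fun ω => W ω = w ∧ T ω) ≠ 0 := by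
    rw [cpr, pr_congr (hevent w)]
    exact hM w
  have hstratum (w : Wt) : cexp P Ycf (fun ω => W ω = w ∧ T ω)
      = cexp P Y (fun ω => M ω = m ∧ W ω = w ∧ T ω) := by
    rw [← (hcond w).cexp_and_eq (hMcf w)]
    exact cexp_congr (hevent w) fun ω hω => hconsY ω hω.2.2 ((hevent w ω).mp hω).1
  rw [← hindep.cexp_eq_expec hT,
    cexp_eq_sum_cexp_mul_cpr fun w => pr_ne_zero_of_cpr_ne_zero (hM w)]
  simp only [hstratum]

end Identification

theorem rde_identification_general {Ω : Type} {At Wt Mt : Type*} [Fintype Ω] [Fintype Wt]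
    [Fintype Mt] {P : Ω → ℝ} {A : Ω → At} {W : Ω → Wt} {M : Ω → Mt} {Y : Ω → ℝ}
    {Mc : At → Ω → Mt} {Yc : At → Mt → Ω → ℝ} {a astar : At}
    (hconsM : ∀ a' ω, A ω = a' → Mc a' ω = M ω)
    (hconsY : ∀ m ω, A ω = a → M ω = m → Yc a m ω = Y ω)
    (hposA : pr P (fun ω => A ω = a) ≠ 0) (hposAstar : pr P (fun ω => A ω = astar) ≠ 0)
    (hposM : ∀ w m, cpr P (fun ω => M ω = m) (fun ω => W ω = w ∧ A ω = a) ≠ 0)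
    (hindepM : IndepOfEvent P (Mc astar) (fun ω => A ω = astar))
    (hindepY : ∀ m, IndepOfEvent P (Yc a m) (fun ω => A ω = a))
    (hcond : ∀ m w,
      CondIndepOfEvent P (Yc a m) (fun ω => Mc a ω = m) (fun ω => W ω = w ∧ A ω = a)) :
    ∑ m, expec P (Yc a m) * pr P (fun ω => Mc astar ω = m)
      = ∑ m, ∑ w,
          cexp P Y (fun ω => M ω = m ∧ W ω = w ∧ A ω = a)
            * cpr P (fun ω => M ω = m) (fun ω => A ω = astar)
            * cpr P (fun ω => W ω = w) (fun ω => A ω = a) := by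
  refine Finset.sum_congr rfl fun m _ => ?_
  rw [expec_counterfactual_eq_sum_cexp_mul_cpr (hconsM a) (hconsY m) hposA (fun w => hposM w m)
      (hindepY m) (hcond m),
    ← cpr_observed_eq_pr_counterfactual (hconsM astar) hindepM hposAstar m, Finset.sum_mul]
  exact Finset.sum_congr rfl fun w _ => mul_right_comm _ _ _

/-- Identification of randomized interventional analogue means
under model `M1`: under consistency, positivity, A1.1' and A1.2, for all
`a, a* ∈ {0,1}` one has `Σ_m E[Y^{a,m}]·P(M^{a*}=m) = Ψ_RDE(P; a, a*)`; in
particular `γ_RDE = Ψ_RDE(P;1,0) − Ψ_RDE(P;0,0)`. -/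
theorem rde_identification
    (Ω Wt Mt : Type) [Fintype Ω] [Fintype Wt] [Fintype Mt]
    (P : Ω → ℝ) (hP0 : ∀ ω, 0 ≤ P ω) (hP1 : (∑ ω, P ω) = 1)
    (A : Ω → Fin 2) (W : Ω → Wt) (M : Ω → Mt) (Y : Ω → ℝ)
    (Wc : Fin 2 → Ω → Wt) (Mc : Fin 2 → Ω → Mt) (Yc : Fin 2 → Mt → Ω → ℝ)
    -- consistency
    (hconsW : ∀ (a : Fin 2) (ω : Ω), A ω = a → Wc a ω = W ω)
    (hconsM : ∀ (a : Fin 2) (ω : Ω), A ω = a → Mc a ω = M ω)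
    (hconsY : ∀ (a : Fin 2) (m : Mt) (ω : Ω), A ω = a → M ω = m → Yc a m ω = Y ω)
    -- positivity
    (hposA : ∀ a : Fin 2, 0 < pr P (fun ω => A ω = a))
    (hposW : ∀ (a : Fin 2) (w : Wt), 0 < cpr P (fun ω => W ω = w) (fun ω => A ω = a))
    (hposM : ∀ (a : Fin 2) (w : Wt) (m : Mt),
      0 < cpr P (fun ω => M ω = m) (fun ω => W ω = w ∧ A ω = a))
    -- A1.1': for each a, the vector (W^a, M^a, (Y^{a,m})_m) is independent of A
    (hA11 : ∀ (a : Fin 2) (w : Wt) (mv : Mt) (yv : Mt → ℝ) (a' : Fin 2),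
      pr P (fun ω => Wc a ω = w ∧ Mc a ω = mv ∧ (∀ m, Yc a m ω = yv m) ∧ A ω = a')
        = pr P (fun ω => Wc a ω = w ∧ Mc a ω = mv ∧ (∀ m, Yc a m ω = yv m))
            * pr P (fun ω => A ω = a'))
    -- A1.2: Y^{a,m} ⟂ M^a given W on the event {A = a}
    (hA12 : ∀ (a : Fin 2) (m : Mt) (y : ℝ) (mv : Mt) (w : Wt),
      cpr P (fun ω => Yc a m ω = y ∧ Mc a ω = mv) (fun ω => W ω = w ∧ A ω = a)
        = cpr P (fun ω => Yc a m ω = y) (fun ω => W ω = w ∧ A ω = a)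
            * cpr P (fun ω => Mc a ω = mv) (fun ω => W ω = w ∧ A ω = a)) :
    (∀ a astar : Fin 2,
        (∑ m, expec P (Yc a m) * pr P (fun ω => Mc astar ω = m))
          = psiRDE P A W M Y a astar)
    ∧ ((∑ m, expec P (Yc 1 m) * pr P (fun ω => Mc 0 ω = m))
          - (∑ m, expec P (Yc 0 m) * pr P (fun ω => Mc 0 ω = m))
        = psiRDE P A W M Y 1 0 - psiRDE P A W M Y 0 0) := by
  have hjoint (a : Fin 2) :
      IndepOfEvent P (fun ω => (Wc a ω, Mc a ω, fun m => Yc a m ω)) (fun ω => A ω = a) :=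
    fun ⟨w, mv, yv⟩ => by
      simpa only [Prod.mk.injEq, funext_iff, and_assoc] using hA11 a w mv yv a
  have hmean (a astar : Fin 2) :
      ∑ m, expec P (Yc a m) * pr P (fun ω => Mc astar ω = m) = psiRDE P A W M Y a astar :=
    rde_identification_general hconsM (hconsY a) (hposA a).ne' (hposA astar).ne'
      (fun w m => (hposM a w m).ne') ((hjoint astar).comp fun v => v.2.1)
      (fun m => (hjoint a).comp fun v => v.2.2 m) fun m w y => hA12 a m y m w
  exact ⟨hmean, by rw [hmean, hmean]⟩
end
end

section
/- Concordance of the natural direct effect with its W-conditional randomized interventional analogue under model M2: under consistency, positivity, A1.1', A1.2, A2.1, A2.2 and A2.3, for all a, a* ∈ {0,1} one has E[Y^{a,M^{a*}}] = E[Y^{a,G_{a*|W}}]; in particular E[Y^{1,M^0}] − E[Y^{0,M^0}] = E[Y^{1,G_{0|W}}] − E[Y^{0,G_{0|W}}]. -/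
open Classical

noncomputable section

/-- The natural (cross-world) mediation counterfactual
`Y^{a,M^{a*}} := Σ_m 1{M^{a*}=m} · Y^{a,m}`. -/
def natCf {Ω Mt : Type} [Fintype Mt]
    (Mc : Fin 2 → Ω → Mt) (Yc : Fin 2 → Mt → Ω → ℝ) (a astar : Fin 2) : Ω → ℝ :=
  fun ω => ∑ m, if Mc astar ω = m then Yc a m ω else 0

/-- `E[Y^{a,G_{a*|W}}] = Σ_w P(W^a=w) Σ_m P(M^{a*}=m | W^{a*}=w) · E[Y^{a,m} | W^a=w]`. -/
def gMeanW {Ω Wt Mt : Type} [Fintype Ω] [Fintype Wt] [Fintype Mt]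
    (P : Ω → ℝ) (Wc : Fin 2 → Ω → Wt) (Mc : Fin 2 → Ω → Mt)
    (Yc : Fin 2 → Mt → Ω → ℝ) (a astar : Fin 2) : ℝ :=
  ∑ w, pr P (fun ω => Wc a ω = w) *
    (∑ m, cpr P (fun ω => Mc astar ω = m) (fun ω => Wc astar ω = w)
      * cexp P (Yc a m) (fun ω => Wc a ω = w))

/-!
Write `V` for the vector of all counterfactual mediators and outcomes. By A2.1 and A2.3 the pair
`(W, V)` is independent of `A` (contraction). On `{A = a}` consistency gives
`(W^a, M^a, Y^{a,·}) = (W, M^a, Y^{a,·})`, and both vectors are independent of that event, the first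
by A1.1', so they have the same law: every `W^a` in `E[Y^{a,G_{a*|W}}]` may be replaced by `W`.
Independence of `(W, V)` and `A` also turns A2.2 into `Y^{a,m} ⟂ M^{a*} | W`, and the result is then
the law of total expectation over `W` and `M^{a*}`.
-/

section FiniteProbability

variable {Ω α β ι : Type} [Fintype Ω] {P : Ω → ℝ}

/-- The conditional mass function `P(· | T)`; it is identically `0` when `T` is null. -/
def condWeight (P : Ω → ℝ) (T : Ω → Prop) : Ω → ℝ :=
  fun ω => (if T ω then P ω else 0) / pr P T

/-- Independence of the random variable `X` and the event `S`. Independence given an event `T` is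
expressed by taking `condWeight P T` for the mass function. -/
def IndepOf (P : Ω → ℝ) (X : Ω → α) (S : Ω → Prop) : Prop :=
  ∀ x, pr P (fun ω => X ω = x ∧ S ω) = pr P (fun ω => X ω = x) * pr P S

theorem pr_eq_expec_ite (P : Ω → ℝ) (S : Ω → Prop) :
    pr P S = expec P (fun ω => if S ω then 1 else 0) := by
  simp only [pr, expec, ite_mul, one_mul, zero_mul]

theorem pr_and_eq_expec_ite_ite (P : Ω → ℝ) (S T : Ω → Prop) :
    pr P (fun ω => S ω ∧ T ω) = expec P (fun ω => if S ω then if T ω then 1 else 0 else 0) := by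
  simp only [pr_eq_expec_ite, ← ite_and]
  congr!

theorem cpr_eq_pr_condWeight (P : Ω → ℝ) (S T : Ω → Prop) :
    cpr P S T = pr (condWeight P T) S := by
  simp only [cpr, pr, condWeight, Finset.sum_div, ite_and, ite_div, zero_div]

theorem cexp_eq_expec_condWeight (P : Ω → ℝ) (X : Ω → ℝ) (T : Ω → Prop) :
    cexp P X T = expec (condWeight P T) X := by
  simp only [cexp, expec, condWeight, Finset.sum_div, ite_div, zero_div, mul_ite, mul_zero,
    mul_div_assoc]

theorem cexp_eq_expec_ite_div (P : Ω → ℝ) (X : Ω → ℝ) (T : Ω → Prop) :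
    cexp P X T = expec P (fun ω => if T ω then X ω else 0) / pr P T := by
  simp only [cexp, expec, ite_mul, zero_mul]

theorem cpr_eq_cexp_ite (P : Ω → ℝ) (S T : Ω → Prop) :
    cpr P S T = cexp P (fun ω => if S ω then 1 else 0) T := by
  rw [cpr_eq_pr_condWeight, cexp_eq_expec_condWeight, pr_eq_expec_ite]

theorem indepOf_condWeight_iff {X : Ω → α} {S T : Ω → Prop} :
    IndepOf (condWeight P T) X S ↔
      ∀ x, cpr P (fun ω => X ω = x ∧ S ω) T = cpr P (fun ω => X ω = x) T * cpr P S T := by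
  simp only [IndepOf, cpr_eq_pr_condWeight]

theorem expec_sum [Fintype ι] (P : Ω → ℝ) (X : ι → Ω → ℝ) :
    expec P (fun ω => ∑ i, X i ω) = ∑ i, expec P (X i) := by
  simp only [expec, Finset.sum_mul]
  exact Finset.sum_comm

theorem expec_ite_eq_zero_of_pr_eq_zero (hP : ∀ ω, 0 ≤ P ω) {T : Ω → Prop} (hT : pr P T = 0)
    (X : Ω → ℝ) : expec P (fun ω => if T ω then X ω else 0) = 0 := by
  have hPT : ∀ ω, (if T ω then P ω else 0) = 0 := fun ω =>
    (Finset.sum_eq_zero_iff_of_nonneg fun ω _ => ite_nonneg (hP ω) le_rfl).mp hT ω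
      (Finset.mem_univ ω)
  refine Finset.sum_eq_zero fun ω _ => ?_
  rw [ite_zero_mul, ← mul_ite_zero, hPT, mul_zero]

theorem pr_mul_cexp (hP : ∀ ω, 0 ≤ P ω) (X : Ω → ℝ) (T : Ω → Prop) :
    pr P T * cexp P X T = expec P (fun ω => if T ω then X ω else 0) := by
  rw [cexp_eq_expec_ite_div]
  exact mul_div_cancel_of_imp' fun hT => expec_ite_eq_zero_of_pr_eq_zero hP hT X

theorem pr_mul_cpr (hP : ∀ ω, 0 ≤ P ω) (S T : Ω → Prop) :
    pr P T * cpr P S T = pr P (fun ω => T ω ∧ S ω) := by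
  rw [cpr_eq_cexp_ite, pr_mul_cexp hP, pr_and_eq_expec_ite_ite]

theorem expec_eq_sum_pr_mul_cexp [Fintype ι] (hP : ∀ ω, 0 ≤ P ω) (X : Ω → ℝ) (W : Ω → ι) :
    expec P X = ∑ w, pr P (fun ω => W ω = w) * cexp P X (fun ω => W ω = w) := by
  simp only [pr_mul_cexp hP, ← expec_sum, Finset.sum_ite_eq, Finset.mem_univ, if_true]

theorem expec_ite_comp_eq_sum_image (P : Ω → ℝ) (X : Ω → α) (g : α → ℝ) (S : Ω → Prop) :
    expec P (fun ω => if S ω then g (X ω) else 0) =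
      ∑ x ∈ Finset.univ.image X, g x * pr P (fun ω => X ω = x ∧ S ω) := by
  simp only [pr, expec, Finset.mul_sum]
  rw [Finset.sum_comm]
  refine Finset.sum_congr rfl fun ω _ => ?_
  simp [ite_and]

theorem expec_comp_eq_sum_image (P : Ω → ℝ) (X : Ω → α) (g : α → ℝ) :
    expec P (fun ω => g (X ω)) = ∑ x ∈ Finset.univ.image X, g x * pr P (fun ω => X ω = x) := by
  simpa using expec_ite_comp_eq_sum_image P X g fun _ => True

namespace IndepOf

theorem expec_ite_comp {X : Ω → α} {S : Ω → Prop} (h : IndepOf P X S) (g : α → ℝ) :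
    expec P (fun ω => if S ω then g (X ω) else 0) = pr P S * expec P (fun ω => g (X ω)) := by
  rw [expec_ite_comp_eq_sum_image, expec_comp_eq_sum_image, Finset.mul_sum]
  exact Finset.sum_congr rfl fun x _ => by rw [h x]; ring

theorem comp {X : Ω → α} {S : Ω → Prop} (h : IndepOf P X S) (f : α → β) :
    IndepOf P (fun ω => f (X ω)) S := by
  intro y
  simp only [and_comm (b := S _)]
  rw [pr_and_eq_expec_ite_ite, h.expec_ite_comp fun x => if f x = y then 1 else 0,
    ← pr_eq_expec_ite, mul_comm]

theorem prodMk_of_condWeight (hP : ∀ ω, 0 ≤ P ω) {W : Ω → α} {V : Ω → β} {S : Ω → Prop}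
    (hW : IndepOf P W S) (hV : ∀ w, IndepOf (condWeight P fun ω => W ω = w) V S) :
    IndepOf P (fun ω => (W ω, V ω)) S := by
  rintro ⟨w, v⟩
  have hV' := indepOf_condWeight_iff.mp (hV w) v
  simp only [Prod.mk.injEq, and_assoc]
  calc pr P (fun ω => W ω = w ∧ V ω = v ∧ S ω)
      = pr P (fun ω => W ω = w) * cpr P (fun ω => V ω = v ∧ S ω) (fun ω => W ω = w) :=
        (pr_mul_cpr hP _ _).symm
    _ = cpr P (fun ω => V ω = v) (fun ω => W ω = w) *
          (pr P (fun ω => W ω = w) * cpr P S (fun ω => W ω = w)) := by rw [hV']; ring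
    _ = cpr P (fun ω => V ω = v) (fun ω => W ω = w) * (pr P (fun ω => W ω = w) * pr P S) := by
        rw [pr_mul_cpr hP, hW w]
    _ = pr P (fun ω => W ω = w) * cpr P (fun ω => V ω = v) (fun ω => W ω = w) * pr P S := by ring
    _ = pr P (fun ω => W ω = w ∧ V ω = v) * pr P S := by rw [pr_mul_cpr hP]

theorem expec_comp_eq_of_eqOn {X X' : Ω → α} {S : Ω → Prop} (hX : IndepOf P X S)
    (hX' : IndepOf P X' S) (hS : pr P S ≠ 0) (hXX' : ∀ ω, S ω → X ω = X' ω) (g : α → ℝ) :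
    expec P (fun ω => g (X ω)) = expec P (fun ω => g (X' ω)) := by
  refine mul_left_cancel₀ hS ?_
  rw [← hX.expec_ite_comp, ← hX'.expec_ite_comp]
  congr! 3 with ω hω
  rw [hXX' ω hω]

theorem cexp_comp_eq_of_eqOn {W W' : Ω → α} {V : Ω → β} {S : Ω → Prop}
    (hW : IndepOf P (fun ω => (W ω, V ω)) S) (hW' : IndepOf P (fun ω => (W' ω, V ω)) S)
    (hS : pr P S ≠ 0) (hWW' : ∀ ω, S ω → W ω = W' ω) (g : β → ℝ) (w : α) :
    cexp P (fun ω => g (V ω)) (fun ω => W ω = w) =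
      cexp P (fun ω => g (V ω)) (fun ω => W' ω = w) := by
  have h_expec : ∀ f : β → ℝ, expec P (fun ω => if W ω = w then f (V ω) else 0) =
      expec P (fun ω => if W' ω = w then f (V ω) else 0) := fun f =>
    hW.expec_comp_eq_of_eqOn hW' hS (fun ω hω => by rw [hWW' ω hω])
      fun x => if x.1 = w then f x.2 else 0
  rw [cexp_eq_expec_ite_div, cexp_eq_expec_ite_div, pr_eq_expec_ite, pr_eq_expec_ite, h_expec g,
    h_expec fun _ => 1]

theorem cexp_comp_and {W : Ω → α} {V : Ω → β} {S : Ω → Prop}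
    (h : IndepOf P (fun ω => (W ω, V ω)) S) (hS : pr P S ≠ 0) (g : β → ℝ) (w : α) :
    cexp P (fun ω => g (V ω)) (fun ω => W ω = w ∧ S ω) =
      cexp P (fun ω => g (V ω)) (fun ω => W ω = w) := by
  have h_expec : ∀ f : β → ℝ, expec P (fun ω => if S ω then if W ω = w then f (V ω) else 0 else 0) =
      pr P S * expec P (fun ω => if W ω = w then f (V ω) else 0) := fun f =>
    h.expec_ite_comp fun x => if x.1 = w then f x.2 else 0
  rw [cexp_eq_expec_ite_div, cexp_eq_expec_ite_div, pr_eq_expec_ite P fun ω => W ω = w ∧ S ω,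
    pr_eq_expec_ite P fun ω => W ω = w]
  simp only [and_comm (b := S _), ite_and]
  rw [h_expec g, h_expec fun _ => 1, mul_div_mul_left _ _ hS]

theorem condWeight_of_condWeight_and {W : Ω → α} {V : Ω → β} {S : Ω → Prop}
    (h : IndepOf P (fun ω => (W ω, V ω)) S) (hS : pr P S ≠ 0) {f : β → ι} {R : β → Prop} {w : α}
    (hfR : IndepOf (condWeight P fun ω => W ω = w ∧ S ω) (fun ω => f (V ω)) fun ω => R (V ω)) :
    IndepOf (condWeight P fun ω => W ω = w) (fun ω => f (V ω)) fun ω => R (V ω) := by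
  have h_cpr : ∀ Q : β → Prop, cpr P (fun ω => Q (V ω)) (fun ω => W ω = w ∧ S ω) =
      cpr P (fun ω => Q (V ω)) (fun ω => W ω = w) := fun Q => by
    simpa only [cpr_eq_cexp_ite] using h.cexp_comp_and hS (fun v => if Q v then 1 else 0) w
  refine indepOf_condWeight_iff.mpr fun i => ?_
  rw [← h_cpr fun v => f v = i ∧ R v, ← h_cpr fun v => f v = i, ← h_cpr R]
  exact indepOf_condWeight_iff.mp hfR i

end IndepOf

theorem expec_apply_eq_sum_pr_mul_expec [Fintype ι] {M : Ω → ι} {Y : ι → Ω → ℝ}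
    (h : ∀ m, IndepOf P (Y m) fun ω => M ω = m) :
    expec P (fun ω => Y (M ω) ω) = ∑ m, pr P (fun ω => M ω = m) * expec P (Y m) := by
  have h_sum : ∀ ω, Y (M ω) ω = ∑ m, if M ω = m then Y m ω else 0 := fun ω => by simp
  simp only [h_sum, expec_sum]
  exact Finset.sum_congr rfl fun m _ => (h m).expec_ite_comp id

theorem expec_apply_eq_sum_sum_cpr_mul_cexp [Fintype α] [Fintype ι] (hP : ∀ ω, 0 ≤ P ω)
    {W : Ω → α} {M : Ω → ι} {Y : ι → Ω → ℝ}
    (h : ∀ w m, IndepOf (condWeight P fun ω => W ω = w) (Y m) fun ω => M ω = m) :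
    expec P (fun ω => Y (M ω) ω) = ∑ w, pr P (fun ω => W ω = w) *
      ∑ m, cpr P (fun ω => M ω = m) (fun ω => W ω = w) * cexp P (Y m) (fun ω => W ω = w) := by
  rw [expec_eq_sum_pr_mul_cexp hP _ W]
  simp only [cexp_eq_expec_condWeight, cpr_eq_pr_condWeight,
    expec_apply_eq_sum_pr_mul_expec (h _)]

end FiniteProbability

theorem natCf_apply {Ω Mt : Type} [Fintype Mt] (Mc : Fin 2 → Ω → Mt) (Yc : Fin 2 → Mt → Ω → ℝ)
    (a astar : Fin 2) (ω : Ω) : natCf Mc Yc a astar ω = Yc a (Mc astar ω) ω := by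
  simp [natCf]

theorem nde_rdeW_concordance_M2_general {Ω T Wt Mt : Type} [Fintype Ω] [Fintype Wt] [Fintype Mt]
    {P : Ω → ℝ} (hP0 : ∀ ω, 0 ≤ P ω) {A : Ω → T} {W : Ω → Wt}
    {Wc : T → Ω → Wt} {Mc : T → Ω → Mt} {Yc : T → Mt → Ω → ℝ} {a astar : T}
    (hconsW : ∀ t ω, A ω = t → Wc t ω = W ω)
    (hposa : pr P (fun ω => A ω = a) ≠ 0) (hposastar : pr P (fun ω => A ω = astar) ≠ 0)
    (hA11 : ∀ t, IndepOf P (fun ω => (Wc t ω, Mc t ω, fun m => Yc t m ω)) fun ω => A ω = t)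
    (hA21 : ∀ w t, IndepOf (condWeight P fun ω => W ω = w)
      (fun ω => (fun s => Mc s ω, fun s m => Yc s m ω)) fun ω => A ω = t)
    (hA22 : ∀ m w, IndepOf (condWeight P fun ω => W ω = w ∧ A ω = a) (Yc a m)
      fun ω => Mc astar ω = m)
    (hA23 : ∀ t, IndepOf P W fun ω => A ω = t) :
    expec P (fun ω => Yc a (Mc astar ω) ω) = ∑ w, pr P (fun ω => Wc a ω = w) *
      ∑ m, cpr P (fun ω => Mc astar ω = m) (fun ω => Wc astar ω = w) *
        cexp P (Yc a m) (fun ω => Wc a ω = w) := by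
  have hWV : ∀ t, IndepOf P (fun ω => (W ω, (fun s => Mc s ω, fun s m => Yc s m ω)))
      fun ω => A ω = t := fun t =>
    (hA23 t).prodMk_of_condWeight hP0 fun w => hA21 w t
  have hWMY : ∀ t, IndepOf P (fun ω => (W ω, (Mc t ω, fun m => Yc t m ω))) fun ω => A ω = t :=
    fun t => (hWV t).comp fun x => (x.1, (x.2.1 t, x.2.2 t))
  have hYM : ∀ w m, IndepOf (condWeight P fun ω => W ω = w) (Yc a m) fun ω => Mc astar ω = m :=
    fun w m => (hWV a).condWeight_of_condWeight_and hposa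
      (f := fun v => v.2 a m) (R := fun v => v.1 astar = m) (hA22 m w)
  have h_pr : ∀ w, pr P (fun ω => Wc a ω = w) = pr P (fun ω => W ω = w) := fun w => by
    simpa only [pr_eq_expec_ite] using ((hA11 a).comp Prod.fst).expec_comp_eq_of_eqOn
      (hA23 a) hposa (hconsW a) fun x => if x = w then 1 else 0
  have h_cpr : ∀ w m, cpr P (fun ω => Mc astar ω = m) (fun ω => Wc astar ω = w) =
      cpr P (fun ω => Mc astar ω = m) (fun ω => W ω = w) := fun w m => by
    simpa only [cpr_eq_cexp_ite] using (hA11 astar).cexp_comp_eq_of_eqOn (hWMY astar) hposastar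
      (hconsW astar) (fun x => if x.1 = m then 1 else 0) w
  have h_cexp : ∀ w m, cexp P (Yc a m) (fun ω => Wc a ω = w) =
      cexp P (Yc a m) (fun ω => W ω = w) := fun w m =>
    (hA11 a).cexp_comp_eq_of_eqOn (hWMY a) hposa (hconsW a) (fun x => x.2 m) w
  simp only [h_pr, h_cpr, h_cexp]
  exact expec_apply_eq_sum_sum_cpr_mul_cexp hP0 hYM

/-- Concordance of the natural direct effect with its `W`-conditional
randomized interventional analogue under model `M2`: under consistency, positivity,
A1.1', A1.2, A2.1, A2.2 and A2.3, for all `a, a* ∈ {0,1}` one has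
`E[Y^{a,M^{a*}}] = E[Y^{a,G_{a*|W}}]`; in particular
`E[Y^{1,M^0}] − E[Y^{0,M^0}] = E[Y^{1,G_{0|W}}] − E[Y^{0,G_{0|W}}]`. -/
theorem nde_rdeW_concordance_M2
    (Ω Wt Mt : Type) [Fintype Ω] [Fintype Wt] [Fintype Mt]
    (P : Ω → ℝ) (hP0 : ∀ ω, 0 ≤ P ω) (hP1 : (∑ ω, P ω) = 1)
    (A : Ω → Fin 2) (W : Ω → Wt) (M : Ω → Mt) (Y : Ω → ℝ)
    (Wc : Fin 2 → Ω → Wt) (Mc : Fin 2 → Ω → Mt) (Yc : Fin 2 → Mt → Ω → ℝ)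
    -- consistency
    (hconsW : ∀ (a : Fin 2) (ω : Ω), A ω = a → Wc a ω = W ω)
    (hconsM : ∀ (a : Fin 2) (ω : Ω), A ω = a → Mc a ω = M ω)
    (hconsY : ∀ (a : Fin 2) (m : Mt) (ω : Ω), A ω = a → M ω = m → Yc a m ω = Y ω)
    -- positivity
    (hposA : ∀ a : Fin 2, 0 < pr P (fun ω => A ω = a))
    (hposW : ∀ (a : Fin 2) (w : Wt), 0 < cpr P (fun ω => W ω = w) (fun ω => A ω = a))
    (hposM : ∀ (a : Fin 2) (w : Wt) (m : Mt),
      0 < cpr P (fun ω => M ω = m) (fun ω => W ω = w ∧ A ω = a))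
    -- A1.1': for each a, the vector (W^a, M^a, (Y^{a,m})_m) is independent of A
    (hA11 : ∀ (a : Fin 2) (w : Wt) (mv : Mt) (yv : Mt → ℝ) (a' : Fin 2),
      pr P (fun ω => Wc a ω = w ∧ Mc a ω = mv ∧ (∀ m, Yc a m ω = yv m) ∧ A ω = a')
        = pr P (fun ω => Wc a ω = w ∧ Mc a ω = mv ∧ (∀ m, Yc a m ω = yv m))
            * pr P (fun ω => A ω = a'))
    -- A1.2: Y^{a,m} ⟂ M^a given W on the event {A = a}
    (hA12 : ∀ (a : Fin 2) (m : Mt) (y : ℝ) (mv : Mt) (w : Wt),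
      cpr P (fun ω => Yc a m ω = y ∧ Mc a ω = mv) (fun ω => W ω = w ∧ A ω = a)
        = cpr P (fun ω => Yc a m ω = y) (fun ω => W ω = w ∧ A ω = a)
            * cpr P (fun ω => Mc a ω = mv) (fun ω => W ω = w ∧ A ω = a))
    -- A2.1: the vector (M^0, M^1, (Y^{a,m})_{a,m}) is conditionally independent of A given W
    (hA21 : ∀ (m0 m1 : Mt) (yv : Fin 2 → Mt → ℝ) (w : Wt) (a' : Fin 2),
      cpr P (fun ω => Mc 0 ω = m0 ∧ Mc 1 ω = m1 ∧ (∀ a m, Yc a m ω = yv a m) ∧ A ω = a')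
          (fun ω => W ω = w)
        = cpr P (fun ω => Mc 0 ω = m0 ∧ Mc 1 ω = m1 ∧ (∀ a m, Yc a m ω = yv a m))
              (fun ω => W ω = w)
          * cpr P (fun ω => A ω = a') (fun ω => W ω = w))
    -- A2.2: Y^{a,m} ⟂ M^{a*} given (W, A)
    (hA22 : ∀ (a astar : Fin 2) (m : Mt) (y : ℝ) (mv : Mt) (w : Wt) (a0 : Fin 2),
      cpr P (fun ω => Yc a m ω = y ∧ Mc astar ω = mv) (fun ω => W ω = w ∧ A ω = a0)
        = cpr P (fun ω => Yc a m ω = y) (fun ω => W ω = w ∧ A ω = a0)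
            * cpr P (fun ω => Mc astar ω = mv) (fun ω => W ω = w ∧ A ω = a0))
    -- A2.3: W is independent of A
    (hA23 : ∀ (w : Wt) (a' : Fin 2),
      pr P (fun ω => W ω = w ∧ A ω = a')
        = pr P (fun ω => W ω = w) * pr P (fun ω => A ω = a')) :
    (∀ a astar : Fin 2,
        expec P (natCf Mc Yc a astar) = gMeanW P Wc Mc Yc a astar)
    ∧ (expec P (natCf Mc Yc 1 0) - expec P (natCf Mc Yc 0 0)
        = gMeanW P Wc Mc Yc 1 0 - gMeanW P Wc Mc Yc 0 0) := by
  have h_concordance : ∀ a astar : Fin 2,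
      expec P (natCf Mc Yc a astar) = gMeanW P Wc Mc Yc a astar := by
    intro a astar
    simp only [funext (natCf_apply Mc Yc a astar), gMeanW]
    refine nde_rdeW_concordance_M2_general hP0 hconsW (hposA a).ne' (hposA astar).ne' ?_ ?_
      (fun m w => indepOf_condWeight_iff.mpr fun y => hA22 a astar m y m w a)
      (fun t w => hA23 w t)
    · rintro t ⟨w, mv, yv⟩
      simpa only [Prod.mk.injEq, funext_iff, and_assoc] using hA11 t w mv yv t
    · refine fun w t => indepOf_condWeight_iff.mpr fun ⟨mv, yv⟩ => ?_
      simpa only [Prod.mk.injEq, funext_iff, Fin.forall_fin_two, and_assoc] using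
        hA21 (mv 0) (mv 1) yv w t
  exact ⟨h_concordance, by rw [h_concordance, h_concordance]⟩
end
end

section
/- The mediation formula identifies the L-conditional randomized interventional analogue of the natural direct effect under within-world assumptions only: under consistency, positivity, and the within-world exchangeability assumptions, one has E[Y^{1,G_{0|L}}] − E[Y^{0,G_{0|L}}] = Ψ(P), where E[Y^{a,G_{a*|L}}] := Σ_l P(L=l) Σ_m P(M^{a*}=m | L=l) · E[Y^{a,m} | L=l] and Ψ(P) is the mediation formula. -/
open Classical

noncomputable section

/-- The mediation formula
`Ψ(P) = Σ_m Σ_l ( E[Y|M=m,A=1,L=l] − E[Y|M=m,A=0,L=l] ) · P(M=m|A=0,L=l) · P(L=l)`. -/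
def medForm {Ω Lt Mt : Type} [Fintype Ω] [Fintype Lt] [Fintype Mt]
    (P : Ω → ℝ) (Lv : Ω → Lt) (A : Ω → Fin 2) (M : Ω → Mt) (Y : Ω → ℝ) : ℝ :=
  ∑ m, ∑ l,
    (cexp P Y (fun ω => M ω = m ∧ A ω = 1 ∧ Lv ω = l)
      - cexp P Y (fun ω => M ω = m ∧ A ω = 0 ∧ Lv ω = l))
    * cpr P (fun ω => M ω = m) (fun ω => A ω = 0 ∧ Lv ω = l)
    * pr P (fun ω => Lv ω = l)

/-- `E[Y^{a,G_{a*|L}}] = Σ_l P(L=l) Σ_m P(M^{a*}=m | L=l) · E[Y^{a,m} | L=l]`. -/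
def gMeanL {Ω Lt Mt : Type} [Fintype Ω] [Fintype Lt] [Fintype Mt]
    (P : Ω → ℝ) (Lv : Ω → Lt) (Mc : Fin 2 → Ω → Mt) (Yc : Fin 2 → Mt → Ω → ℝ)
    (a astar : Fin 2) : ℝ :=
  ∑ l, pr P (fun ω => Lv ω = l) *
    (∑ m, cpr P (fun ω => Mc astar ω = m) (fun ω => Lv ω = l)
      * cexp P (Yc a m) (fun ω => Lv ω = l))

/-!
Fix a stratum `T = {L = l}` of positive probability. Conditioning further on an event that is
independent of the variable at hand given the current conditions changes nothing, so conditions can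
be added until consistency applies:
`P(M^a = m | T) = P(M^a = m | A = a, T) = P(M = m | A = a, T)` and
`E[Y^{a,m} | T] = E[Y^{a,m} | A = a, T] = E[Y^{a,m} | M^a = m, A = a, T] = E[Y | M = m, A = a, T]`.
Only the joint law of `M^a` and `Y^{a,m}` for one and the same `a` enters, never a cross-world law.
-/

section Conditioning

variable {Ω β γ : Type} [Fintype Ω] {P : Ω → ℝ} {S S' T : Ω → Prop}

lemma pr_nonneg (hP : ∀ ω, 0 ≤ P ω) (S : Ω → Prop) : 0 ≤ pr P S :=
  Finset.sum_nonneg fun ω _ => by split_ifs <;> simp [hP ω]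

lemma cpr_congr_of_imp (h : ∀ ω, T ω → (S ω ↔ S' ω)) : cpr P S T = cpr P S' T := by
  have hevent : (fun ω => S ω ∧ T ω) = fun ω => S' ω ∧ T ω :=
    funext fun ω => propext (and_congr_left (h ω))
  rw [cpr, cpr, hevent]

lemma cexp_congr_of_imp {X X' : Ω → ℝ} (h : ∀ ω, T ω → X ω = X' ω) :
    cexp P X T = cexp P X' T := by
  unfold cexp
  congr 1
  refine Finset.sum_congr rfl fun ω _ => ?_
  split_ifs with hω
  · rw [h ω hω]
  · rfl

lemma cpr_and (h : cpr P S T ≠ 0) (U : Ω → Prop) :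
    cpr P (fun ω => U ω ∧ S ω) T = cpr P U (fun ω => S ω ∧ T ω) * cpr P S T := by
  have hST : pr P (fun ω => S ω ∧ T ω) ≠ 0 := (div_ne_zero_iff.1 h).1
  simp only [cpr, and_assoc]
  rw [div_mul_div_cancel₀ hST]

lemma cpr_comp_and_eq_sum (W : Ω → β) (B : β → Prop) (S T : Ω → Prop) :
    cpr P (fun ω => B (W ω) ∧ S ω) T
      = ∑ b ∈ (Finset.univ.image W).filter B, cpr P (fun ω => W ω = b ∧ S ω) T := by
  simp only [cpr, ← Finset.sum_div]
  congr 1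
  unfold pr
  rw [Finset.sum_comm]
  refine Finset.sum_congr rfl fun ω _ => ?_
  by_cases hST : S ω ∧ T ω <;> simp [and_assoc, hST]

lemma cpr_comp_eq_sum (W : Ω → β) (B : β → Prop) (T : Ω → Prop) :
    cpr P (fun ω => B (W ω)) T
      = ∑ b ∈ (Finset.univ.image W).filter B, cpr P (fun ω => W ω = b) T := by
  simpa only [and_true] using cpr_comp_and_eq_sum W B (fun _ => True) T

lemma cexp_eq_sum_mul_cpr (X : Ω → ℝ) (T : Ω → Prop) :
    cexp P X T = ∑ x ∈ Finset.univ.image X, x * cpr P (fun ω => X ω = x) T := by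
  simp only [cexp, cpr, ← mul_div_assoc, ← Finset.sum_div]
  congr 1
  simp only [pr, Finset.mul_sum]
  rw [Finset.sum_comm]
  refine Finset.sum_congr rfl fun ω _ => ?_
  simp [ite_and]

/-- Independence of the random variable `W` and the event `S` conditionally on the event `T`. Since
the sample space is finite, it is enough to ask for the product formula on the atoms `W = b`. -/
def CondIndepEvent (P : Ω → ℝ) (W : Ω → β) (S T : Ω → Prop) : Prop :=
  ∀ b, cpr P (fun ω => W ω = b ∧ S ω) T = cpr P (fun ω => W ω = b) T * cpr P S T

namespace CondIndepEvent

lemma comp {W : Ω → β} (h : CondIndepEvent P W S T) (g : β → γ) :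
    CondIndepEvent P (fun ω => g (W ω)) S T := by
  intro c
  rw [cpr_comp_and_eq_sum W (g · = c), cpr_comp_eq_sum W (g · = c), Finset.sum_mul]
  exact Finset.sum_congr rfl fun b _ => h b

lemma cpr_eq {W : Ω → β} (h : CondIndepEvent P W S T) (hS : cpr P S T ≠ 0) (b : β) :
    cpr P (fun ω => W ω = b) (fun ω => S ω ∧ T ω) = cpr P (fun ω => W ω = b) T :=
  mul_right_cancel₀ hS <| (cpr_and hS _).symm.trans (h b)

lemma cexp_eq {X : Ω → ℝ} (h : CondIndepEvent P X S T) (hS : cpr P S T ≠ 0) :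
    cexp P X (fun ω => S ω ∧ T ω) = cexp P X T := by
  simp only [cexp_eq_sum_mul_cpr, h.cpr_eq hS]

end CondIndepEvent

end Conditioning

section Identification

variable {Ω Mt : Type} [Fintype Ω] {P : Ω → ℝ} {S T : Ω → Prop} {Ma M : Ω → Mt}

lemma cpr_counterfactual_eq (hcons : ∀ ω, S ω → Ma ω = M ω)
    (hindep : CondIndepEvent P Ma S T) (hS : cpr P S T ≠ 0) (m : Mt) :
    cpr P (fun ω => Ma ω = m) T = cpr P (fun ω => M ω = m) (fun ω => S ω ∧ T ω) :=
  calc cpr P (fun ω => Ma ω = m) T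
      = cpr P (fun ω => Ma ω = m) (fun ω => S ω ∧ T ω) := (hindep.cpr_eq hS m).symm
    _ = cpr P (fun ω => M ω = m) (fun ω => S ω ∧ T ω) :=
        cpr_congr_of_imp fun ω hω => by rw [hcons ω hω.1]

lemma cexp_counterfactual_eq {m : Mt} {Yam Y : Ω → ℝ}
    (hconsM : ∀ ω, S ω → Ma ω = M ω) (hconsY : ∀ ω, S ω → M ω = m → Yam ω = Y ω)
    (hindepS : CondIndepEvent P Yam S T)
    (hindepM : CondIndepEvent P Yam (fun ω => Ma ω = m) (fun ω => S ω ∧ T ω))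
    (hS : cpr P S T ≠ 0) (hM : cpr P (fun ω => M ω = m) (fun ω => S ω ∧ T ω) ≠ 0) :
    cexp P Yam T = cexp P Y (fun ω => M ω = m ∧ S ω ∧ T ω) := by
  have hMa : cpr P (fun ω => Ma ω = m) (fun ω => S ω ∧ T ω) ≠ 0 := by
    rwa [cpr_congr_of_imp fun ω hω => by rw [hconsM ω hω.1]]
  have hevent : (fun ω => Ma ω = m ∧ S ω ∧ T ω) = fun ω => M ω = m ∧ S ω ∧ T ω :=
    funext fun ω => propext <| and_congr_left fun hω => by rw [hconsM ω hω.1]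
  calc cexp P Yam T
      = cexp P Yam (fun ω => S ω ∧ T ω) := (hindepS.cexp_eq hS).symm
    _ = cexp P Yam (fun ω => Ma ω = m ∧ S ω ∧ T ω) := (hindepM.cexp_eq hMa).symm
    _ = cexp P Yam (fun ω => M ω = m ∧ S ω ∧ T ω) := by rw [hevent]
    _ = cexp P Y (fun ω => M ω = m ∧ S ω ∧ T ω) :=
        cexp_congr_of_imp fun ω hω => hconsY ω hω.2.1 hω.1

end Identification

section Mediation

variable {Ω Lt Mt : Type} [Fintype Ω] [Fintype Lt] [Fintype Mt]

/-- The observed-data counterpart of `gMeanL`: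
`Σ_l P(L=l) Σ_m P(M=m | A=a*, L=l) · E[Y | M=m, A=a, L=l]`. -/
def mediationFunctional (P : Ω → ℝ) (Lv : Ω → Lt) (A : Ω → Fin 2) (M : Ω → Mt) (Y : Ω → ℝ)
    (a astar : Fin 2) : ℝ :=
  ∑ l, pr P (fun ω => Lv ω = l) *
    ∑ m, cpr P (fun ω => M ω = m) (fun ω => A ω = astar ∧ Lv ω = l)
      * cexp P Y (fun ω => M ω = m ∧ A ω = a ∧ Lv ω = l)

lemma medForm_eq_mediationFunctional_sub (P : Ω → ℝ) (Lv : Ω → Lt) (A : Ω → Fin 2) (M : Ω → Mt)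
    (Y : Ω → ℝ) :
    medForm P Lv A M Y
      = mediationFunctional P Lv A M Y 1 0 - mediationFunctional P Lv A M Y 0 0 := by
  simp only [medForm, mediationFunctional, Finset.mul_sum, ← Finset.sum_sub_distrib]
  rw [Finset.sum_comm]
  refine Finset.sum_congr rfl fun l _ => Finset.sum_congr rfl fun m _ => ?_
  ring

theorem gMeanL_eq_mediationFunctional {P : Ω → ℝ} {Lv : Ω → Lt} {A : Ω → Fin 2} {M : Ω → Mt}
    {Y : Ω → ℝ} {Mc : Fin 2 → Ω → Mt} {Yc : Fin 2 → Mt → Ω → ℝ}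
    (hconsM : ∀ a ω, A ω = a → Mc a ω = M ω)
    (hconsY : ∀ a m ω, A ω = a → M ω = m → Yc a m ω = Y ω)
    (hpos : ∀ l, pr P (fun ω => Lv ω = l) ≠ 0 → ∀ a m,
      cpr P (fun ω => A ω = a) (fun ω => Lv ω = l) ≠ 0 ∧
      cpr P (fun ω => M ω = m) (fun ω => A ω = a ∧ Lv ω = l) ≠ 0)
    (hindepA : ∀ a l, CondIndepEvent P (fun ω => (Mc a ω, fun m => Yc a m ω))
      (fun ω => A ω = a) (fun ω => Lv ω = l))
    (hindepM : ∀ a m l, CondIndepEvent P (Yc a m)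
      (fun ω => Mc a ω = m) (fun ω => A ω = a ∧ Lv ω = l))
    (a astar : Fin 2) :
    gMeanL P Lv Mc Yc a astar = mediationFunctional P Lv A M Y a astar := by
  refine Finset.sum_congr rfl fun l _ => ?_
  rcases eq_or_ne (pr P fun ω => Lv ω = l) 0 with hl | hl
  · rw [hl, zero_mul, zero_mul]
  congr 1
  refine Finset.sum_congr rfl fun m _ => ?_
  have hmediator : cpr P (fun ω => Mc astar ω = m) (fun ω => Lv ω = l)
      = cpr P (fun ω => M ω = m) (fun ω => A ω = astar ∧ Lv ω = l) :=
    cpr_counterfactual_eq (hconsM astar) ((hindepA astar l).comp Prod.fst) (hpos l hl astar m).1 m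
  have houtcome : cexp P (Yc a m) (fun ω => Lv ω = l)
      = cexp P Y (fun ω => M ω = m ∧ A ω = a ∧ Lv ω = l) :=
    cexp_counterfactual_eq (hconsM a) (hconsY a m) ((hindepA a l).comp fun w => w.2 m)
      (hindepM a m l) (hpos l hl a m).1 (hpos l hl a m).2
  rw [hmediator, houtcome]

end Mediation

/-- The mediation formula identifies the `L`-conditional randomized
interventional analogue of the natural direct effect under within-world assumptions
only: under consistency, positivity, and the within-world exchangeability
assumptions, `E[Y^{1,G_{0|L}}] − E[Y^{0,G_{0|L}}] = Ψ(P)`. -/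
theorem mediation_formula_identifies_rdeL
    (Ω Lt Mt : Type) [Fintype Ω] [Fintype Lt] [Fintype Mt]
    (P : Ω → ℝ) (hP0 : ∀ ω, 0 ≤ P ω) (hP1 : (∑ ω, P ω) = 1)
    (Lv : Ω → Lt) (A : Ω → Fin 2) (M : Ω → Mt) (Y : Ω → ℝ)
    (Mc : Fin 2 → Ω → Mt) (Yc : Fin 2 → Mt → Ω → ℝ)
    -- consistency
    (hconsM : ∀ (a : Fin 2) (ω : Ω), A ω = a → Mc a ω = M ω)
    (hconsY : ∀ (a : Fin 2) (m : Mt) (ω : Ω), A ω = a → M ω = m → Yc a m ω = Y ω)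
    -- positivity
    (hpos : ∀ l : Lt, 0 < pr P (fun ω => Lv ω = l) → ∀ (a : Fin 2) (m : Mt),
      0 < cpr P (fun ω => A ω = a) (fun ω => Lv ω = l) ∧
      0 < cpr P (fun ω => M ω = m) (fun ω => A ω = a ∧ Lv ω = l))
    -- within-world exchangeability, part 1:
    -- for each a, (M^a, (Y^{a,m})_m) ⟂ A given L
    (hexch1 : ∀ (a : Fin 2) (mv : Mt) (yv : Mt → ℝ) (l : Lt) (a' : Fin 2),
      cpr P (fun ω => Mc a ω = mv ∧ (∀ m, Yc a m ω = yv m) ∧ A ω = a')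
          (fun ω => Lv ω = l)
        = cpr P (fun ω => Mc a ω = mv ∧ (∀ m, Yc a m ω = yv m)) (fun ω => Lv ω = l)
          * cpr P (fun ω => A ω = a') (fun ω => Lv ω = l))
    -- within-world exchangeability, part 2:
    -- Y^{a,m} ⟂ M^a given L on the event {A = a}
    (hexch2 : ∀ (a : Fin 2) (m : Mt) (y : ℝ) (mv : Mt) (l : Lt),
      cpr P (fun ω => Yc a m ω = y ∧ Mc a ω = mv) (fun ω => Lv ω = l ∧ A ω = a)
        = cpr P (fun ω => Yc a m ω = y) (fun ω => Lv ω = l ∧ A ω = a)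
            * cpr P (fun ω => Mc a ω = mv) (fun ω => Lv ω = l ∧ A ω = a)) :
    gMeanL P Lv Mc Yc 1 0 - gMeanL P Lv Mc Yc 0 0 = medForm P Lv A M Y := by
  have hpos' : ∀ l, pr P (fun ω => Lv ω = l) ≠ 0 → ∀ a m,
      cpr P (fun ω => A ω = a) (fun ω => Lv ω = l) ≠ 0 ∧
      cpr P (fun ω => M ω = m) (fun ω => A ω = a ∧ Lv ω = l) ≠ 0 := fun l hl a m =>
    (hpos l ((pr_nonneg hP0 _).lt_of_ne' hl) a m).imp ne_of_gt ne_of_gt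
  have hindepA : ∀ a l, CondIndepEvent P (fun ω => (Mc a ω, fun m => Yc a m ω))
      (fun ω => A ω = a) (fun ω => Lv ω = l) := by
    rintro a l ⟨mv, yv⟩
    simpa only [Prod.mk.injEq, funext_iff, and_assoc] using hexch1 a mv yv l a
  have hindepM : ∀ a m l, CondIndepEvent P (Yc a m)
      (fun ω => Mc a ω = m) (fun ω => A ω = a ∧ Lv ω = l) := by
    intro a m l y
    simpa only [and_comm (a := Lv _ = l)] using hexch2 a m y m l
  have hident := gMeanL_eq_mediationFunctional hconsM hconsY hpos' hindepA hindepM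
  rw [hident, hident, medForm_eq_mediationFunctional_sub]
end
end

section
/- Non-identification of the natural direct effect under model M1: there exist two tuples of random variables (A, W, M, Y, (W^a, M^a)_{a∈{0,1}}, (Y^{a,m})_{a,m}), each defined on some finite probability space and each satisfying consistency, positivity, A1.1' and A1.2, such that the two induced joint distributions of the observed data (A, W, M, Y) are identical, while the two values of E[Y^{1,M^0}], with Y^{1,M^0} := Σ_m 1{M^0=m} · Y^{1,m}, differ. Consequently E[Y^{1,M^0}] is not a function of the observed-data distribution under the model defined by consistency, positivity, A1.1' and A1.2. -/
open Classical

noncomputable section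

/-!
Randomizing `A` independently of all potential outcomes makes the observed law depend only on the
single-world laws of `(W^a, M^a, Y^{a, M^a})`, whereas `E[Y^{1, M^0}]` depends on the coupling of
the two worlds. Take independent uniform `W`, `U`, `V` with `U`, `V` valued in the mediator space
and, for a permutation `σ`, put `M^0 = σ U`, `M^1 = V`, `Y^{0,m} = 0`, `Y^{1,m} = 1{U = m}`. The
single-world laws do not depend on `σ`, but `E[Y^{1, M^0}]` is the proportion of fixed points
of `σ`.
-/

section FiniteProbability

variable {Ω Ω' α β : Type} [Fintype Ω] [Fintype Ω'] [Fintype α] [Fintype β]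

theorem pr_reindex (e : Ω' ≃ Ω) (P : Ω → ℝ) (S : Ω → Prop) :
    pr P S = pr (fun ω => P (e ω)) (fun ω => S (e ω)) :=
  (e.sum_comp fun ω => if S ω then P ω else 0).symm

theorem pr_pos {P : Ω → ℝ} (hP : ∀ ω, 0 < P ω) {S : Ω → Prop} (hS : ∃ ω, S ω) : 0 < pr P S := by
  obtain ⟨ω, hω⟩ := hS
  refine Finset.sum_pos' (fun ω' _ => ?_) ⟨ω, Finset.mem_univ ω, by simpa [hω] using hP ω⟩
  split_ifs
  exacts [(hP ω').le, le_rfl]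

theorem cpr_pos {P : Ω → ℝ} (hP : ∀ ω, 0 < P ω) {S T : Ω → Prop} (hST : ∃ ω, S ω ∧ T ω) :
    0 < cpr P S T :=
  div_pos (pr_pos hP hST) (pr_pos hP (hST.imp fun _ h => h.2))

theorem pr_eq_one_iff {P : Ω → ℝ} (hP : ∀ ω, 0 < P ω) (hsum : ∑ ω, P ω = 1) {S : Ω → Prop} :
    pr P S = 1 ↔ ∀ ω, S ω := by
  have ite_le (ω : Ω) : (if S ω then P ω else 0) ≤ P ω := by
    split_ifs
    exacts [le_rfl, (hP ω).le]
  rw [← hsum, pr, Finset.sum_eq_sum_iff_of_le fun ω _ => ite_le ω]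
  simp [(hP _).ne]

theorem expec_indicator (P : Ω → ℝ) (S : Ω → Prop) :
    expec P (fun ω => if S ω then 1 else 0) = pr P S := by
  simp [expec, pr]

/-- The law of an independent pair whose components have laws `p` and `q`. -/
def prodLaw {α β : Type} (p : α → ℝ) (q : β → ℝ) (x : α × β) : ℝ := p x.1 * q x.2

theorem prodLaw_mem_stdSimplex {p : α → ℝ} {q : β → ℝ} (hp : p ∈ stdSimplex ℝ α)
    (hq : q ∈ stdSimplex ℝ β) : prodLaw p q ∈ stdSimplex ℝ (α × β) := by
  refine ⟨fun x => mul_nonneg (hp.1 x.1) (hq.1 x.2), ?_⟩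
  simp only [prodLaw, Fintype.sum_prod_type, ← Finset.mul_sum, hq.2, mul_one, hp.2]

theorem pr_prodLaw (p : α → ℝ) (q : β → ℝ) (S : α × β → Prop) :
    pr (prodLaw p q) S = ∑ a, p a * pr q (fun b => S (a, b)) := by
  simp only [pr, prodLaw, Fintype.sum_prod_type, Finset.mul_sum, mul_ite, mul_zero]

theorem pr_prodLaw_and_fst_eq (p : α → ℝ) (q : β → ℝ) (S : α × β → Prop) (a : α) :
    pr (prodLaw p q) (fun x => S x ∧ x.1 = a) = p a * pr q (fun b => S (a, b)) := by
  rw [pr_prodLaw, Fintype.sum_eq_single a fun a' ha' => by simp [pr, ha']]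
  simp only [and_true]

theorem pr_prodLaw_fst {q : β → ℝ} (hq : ∑ b, q b = 1) (p : α → ℝ) (S : α → Prop) :
    pr (prodLaw p q) (fun x => S x.1) = pr p S := by
  rw [pr_prodLaw, pr]
  refine Finset.sum_congr rfl fun a _ => ?_
  by_cases ha : S a <;> simp [pr, ha, hq]

theorem pr_prodLaw_snd {p : α → ℝ} (hp : ∑ a, p a = 1) (q : β → ℝ) (T : β → Prop) :
    pr (prodLaw p q) (fun x => T x.2) = pr q T := by
  simp only [pr_prodLaw, ← Finset.sum_mul, hp, one_mul]

theorem pr_prodLaw_fst_and_snd {p : α → ℝ} {q : β → ℝ} (hp : ∑ a, p a = 1) (hq : ∑ b, q b = 1)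
    (S : α → Prop) (T : β → Prop) :
    pr (prodLaw p q) (fun x => S x.1 ∧ T x.2)
      = pr (prodLaw p q) (fun x => S x.1) * pr (prodLaw p q) (fun x => T x.2) := by
  rw [pr_prodLaw_fst hq, pr_prodLaw_snd hp, pr_prodLaw, pr, Finset.sum_mul]
  refine Finset.sum_congr rfl fun a _ => ?_
  by_cases ha : S a <;> simp [pr, ha]

theorem pr_prodLaw_fst_eq {q : β → ℝ} (hq : ∑ b, q b = 1) (p : α → ℝ) (a : α) :
    pr (prodLaw p q) (fun x => x.1 = a) = p a := by
  rw [pr_prodLaw_fst hq p (· = a)]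
  simp [pr]

theorem cpr_prodLaw_fst_eq {p : α → ℝ} {q : β → ℝ} (hq : ∑ b, q b = 1) {a : α} (ha : p a ≠ 0)
    (S : α × β → Prop) :
    cpr (prodLaw p q) S (fun x => x.1 = a) = pr q (fun b => S (a, b)) := by
  rw [cpr, pr_prodLaw_and_fst_eq, pr_prodLaw_fst_eq hq, mul_div_cancel_left₀ _ ha]

theorem cpr_prodLaw_and_fst_eq {p : α → ℝ} (q : β → ℝ) {a : α} (ha : p a ≠ 0)
    (S T : α × β → Prop) :
    cpr (prodLaw p q) S (fun x => T x ∧ x.1 = a)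
      = cpr q (fun b => S (a, b)) (fun b => T (a, b)) := by
  simp only [cpr, ← and_assoc, pr_prodLaw_and_fst_eq, mul_div_mul_left _ _ ha]

theorem expec_prodLaw_snd {p : α → ℝ} (hp : ∑ a, p a = 1) (q : β → ℝ) (X : β → ℝ) :
    expec (prodLaw p q) (fun x => X x.2) = expec q X := by
  simp only [expec, prodLaw, Fintype.sum_prod_type, mul_left_comm (X _)]
  simp only [← Finset.mul_sum, ← Finset.sum_mul, hp, one_mul]

variable [Nonempty α]

/-- The uniform law on a nonempty finite type. -/
def uniformLaw (α : Type) [Fintype α] [Nonempty α] : α → ℝ :=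
  (stdSimplex.barycenter : stdSimplex ℝ α).val

theorem uniformLaw_mem_stdSimplex : uniformLaw α ∈ stdSimplex ℝ α :=
  (stdSimplex.barycenter : stdSimplex ℝ α).property

theorem uniformLaw_pos (a : α) : 0 < uniformLaw α a :=
  inv_pos.2 (Nat.cast_pos.2 Fintype.card_pos)

end FiniteProbability

section CausalModels

variable {Ω Ω' E 𝓦 𝓜 : Type} [Fintype Ω] [Fintype Ω'] [Fintype E]

/-- A law on the sample space `Ω` together with the counterfactual variables `W^a`, `M^a` and
`Y^{a,m}`, written `Wc a`, `Mc a` and `Yc a m`. -/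
structure PotentialOutcomes (Ω 𝓦 𝓜 : Type) where
  law : Ω → ℝ
  Wc : Fin 2 → Ω → 𝓦
  Mc : Fin 2 → Ω → 𝓜
  Yc : Fin 2 → 𝓜 → Ω → ℝ

/-- The mean `E[Y^{1, M^0}]`. -/
def PotentialOutcomes.crossWorldMean (X : PotentialOutcomes Ω 𝓦 𝓜) : ℝ :=
  expec X.law fun ω => X.Yc 1 (X.Mc 0 ω) ω

/-- Potential outcomes together with observed data `(A, W, M, Y)` on the same sample space. No
relation between the two is imposed; see `CausalModel.IsM1`. -/
structure CausalModel (Ω 𝓦 𝓜 : Type) extends PotentialOutcomes Ω 𝓦 𝓜 where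
  A : Ω → Fin 2
  W : Ω → 𝓦
  M : Ω → 𝓜
  Y : Ω → ℝ

namespace CausalModel

/-- The model M1: consistency, positivity, A1.1' (`indep_A`) and A1.2 (`condIndep_Yc_Mc`). -/
structure IsM1 (X : CausalModel Ω 𝓦 𝓜) : Prop where
  law_nonneg : ∀ ω, 0 ≤ X.law ω
  sum_law : ∑ ω, X.law ω = 1
  consistent_W : ∀ a ω, X.A ω = a → X.Wc a ω = X.W ω
  consistent_M : ∀ a ω, X.A ω = a → X.Mc a ω = X.M ω
  consistent_Y : ∀ a m ω, X.A ω = a → X.M ω = m → X.Yc a m ω = X.Y ω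
  pr_A_pos : ∀ a, 0 < pr X.law (fun ω => X.A ω = a)
  cpr_W_pos : ∀ a w, 0 < cpr X.law (fun ω => X.W ω = w) (fun ω => X.A ω = a)
  cpr_M_pos : ∀ a w m, 0 < cpr X.law (fun ω => X.M ω = m) (fun ω => X.W ω = w ∧ X.A ω = a)
  indep_A : ∀ a w mv (yv : 𝓜 → ℝ) a',
    pr X.law (fun ω => X.Wc a ω = w ∧ X.Mc a ω = mv ∧ (∀ m, X.Yc a m ω = yv m) ∧ X.A ω = a')
      = pr X.law (fun ω => X.Wc a ω = w ∧ X.Mc a ω = mv ∧ ∀ m, X.Yc a m ω = yv m)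
          * pr X.law (fun ω => X.A ω = a')
  condIndep_Yc_Mc : ∀ a m y mv w,
    cpr X.law (fun ω => X.Yc a m ω = y ∧ X.Mc a ω = mv) (fun ω => X.W ω = w ∧ X.A ω = a)
      = cpr X.law (fun ω => X.Yc a m ω = y) (fun ω => X.W ω = w ∧ X.A ω = a)
          * cpr X.law (fun ω => X.Mc a ω = mv) (fun ω => X.W ω = w ∧ X.A ω = a)

/-- The joint probability mass function of the observed data `(A, W, M, Y)`. -/
def observedLaw (X : CausalModel Ω 𝓦 𝓜) (a : Fin 2) (w : 𝓦) (m : 𝓜) (y : ℝ) : ℝ :=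
  pr X.law fun ω => X.A ω = a ∧ X.W ω = w ∧ X.M ω = m ∧ X.Y ω = y

/-- The same model on an equivalent sample space. -/
def reindex {Ω Ω' : Type} (e : Ω' ≃ Ω) (X : CausalModel Ω 𝓦 𝓜) : CausalModel Ω' 𝓦 𝓜 where
  law ω := X.law (e ω)
  Wc a ω := X.Wc a (e ω)
  Mc a ω := X.Mc a (e ω)
  Yc a m ω := X.Yc a m (e ω)
  A ω := X.A (e ω)
  W ω := X.W (e ω)
  M ω := X.M (e ω)
  Y ω := X.Y (e ω)

theorem IsM1.reindex {X : CausalModel Ω 𝓦 𝓜} (hX : X.IsM1) (e : Ω' ≃ Ω) :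
    (X.reindex e).IsM1 where
  law_nonneg ω := hX.law_nonneg (e ω)
  sum_law := (e.sum_comp X.law).trans hX.sum_law
  consistent_W a ω := hX.consistent_W a (e ω)
  consistent_M a ω := hX.consistent_M a (e ω)
  consistent_Y a m ω := hX.consistent_Y a m (e ω)
  pr_A_pos := by simpa only [pr_reindex e] using! hX.pr_A_pos
  cpr_W_pos := by simpa only [cpr, pr_reindex e] using! hX.cpr_W_pos
  cpr_M_pos := by simpa only [cpr, pr_reindex e] using! hX.cpr_M_pos
  indep_A := by simpa only [pr_reindex e] using! hX.indep_A
  condIndep_Yc_Mc := by simpa only [cpr, pr_reindex e] using! hX.condIndep_Yc_Mc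

theorem observedLaw_reindex (e : Ω' ≃ Ω) (X : CausalModel Ω 𝓦 𝓜) :
    (X.reindex e).observedLaw = X.observedLaw := by
  funext a w m y
  exact (pr_reindex e X.law fun ω => X.A ω = a ∧ X.W ω = w ∧ X.M ω = m ∧ X.Y ω = y).symm

theorem crossWorldMean_reindex (e : Ω' ≃ Ω) (X : CausalModel Ω 𝓦 𝓜) :
    (X.reindex e).crossWorldMean = X.crossWorldMean :=
  e.sum_comp fun ω => X.Yc 1 (X.Mc 0 ω) ω * X.law ω

end CausalModel

namespace PotentialOutcomes

/-- The randomized experiment: a treatment with law `p` is drawn independently of the potential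
outcomes, and the observed data are those of the treatment drawn. -/
def randomize {E : Type} (p : Fin 2 → ℝ) (X : PotentialOutcomes E 𝓦 𝓜) :
    CausalModel (Fin 2 × E) 𝓦 𝓜 where
  law := prodLaw p X.law
  Wc a x := X.Wc a x.2
  Mc a x := X.Mc a x.2
  Yc a m x := X.Yc a m x.2
  A x := x.1
  W x := X.Wc x.1 x.2
  M x := X.Mc x.1 x.2
  Y x := X.Yc x.1 (X.Mc x.1 x.2) x.2

/-- For all `a` and `m`, `Y^{a,m}` and `M^a` are conditionally independent given `W^a`: the
counterfactual form of A1.2. -/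
def CondIndepYcMc (X : PotentialOutcomes Ω 𝓦 𝓜) : Prop :=
  ∀ a m y mv w,
    cpr X.law (fun ω => X.Yc a m ω = y ∧ X.Mc a ω = mv) (fun ω => X.Wc a ω = w)
      = cpr X.law (fun ω => X.Yc a m ω = y) (fun ω => X.Wc a ω = w)
          * cpr X.law (fun ω => X.Mc a ω = mv) (fun ω => X.Wc a ω = w)

theorem isM1_randomize {p : Fin 2 → ℝ} (hp : ∀ a, 0 < p a) (hp_sum : ∑ a, p a = 1)
    {X : PotentialOutcomes E 𝓦 𝓜} (hlaw : X.law ∈ stdSimplex ℝ E)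
    (hW : ∀ a w, 0 < pr X.law (fun e => X.Wc a e = w))
    (hM : ∀ a w m, 0 < cpr X.law (fun e => X.Mc a e = m) (fun e => X.Wc a e = w))
    (hYM : X.CondIndepYcMc) :
    (X.randomize p).IsM1 where
  law_nonneg := (prodLaw_mem_stdSimplex ⟨fun a => (hp a).le, hp_sum⟩ hlaw).1
  sum_law := (prodLaw_mem_stdSimplex ⟨fun a => (hp a).le, hp_sum⟩ hlaw).2
  consistent_W := by rintro a x rfl; rfl
  consistent_M := by rintro a x rfl; rfl
  consistent_Y := by rintro a m x rfl rfl; rfl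
  pr_A_pos a := (hp a).trans_eq (pr_prodLaw_fst_eq hlaw.2 p a).symm
  cpr_W_pos a w := by
    simpa only [randomize, cpr_prodLaw_fst_eq hlaw.2 (hp a).ne'] using hW a w
  cpr_M_pos a w m := by
    simpa only [randomize, cpr_prodLaw_and_fst_eq X.law (hp a).ne'] using hM a w m
  indep_A a w mv yv a' := by
    have h := pr_prodLaw_fst_and_snd hp_sum hlaw.2 (· = a')
      fun e => X.Wc a e = w ∧ X.Mc a e = mv ∧ ∀ m, X.Yc a m e = yv m
    rw [mul_comm] at h
    simpa only [randomize, and_comm, and_left_comm, and_assoc] using h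
  condIndep_Yc_Mc a m y mv w := by
    simpa only [randomize, cpr_prodLaw_and_fst_eq X.law (hp a).ne'] using hYM a m y mv w

/-- The joint probability mass function of `(W^a, M^a, Y^{a, M^a})`. -/
def singleWorldLaw (X : PotentialOutcomes Ω 𝓦 𝓜) (a : Fin 2) (w : 𝓦) (m : 𝓜) (y : ℝ) : ℝ :=
  pr X.law fun ω => X.Wc a ω = w ∧ X.Mc a ω = m ∧ X.Yc a (X.Mc a ω) ω = y

theorem observedLaw_randomize (p : Fin 2 → ℝ) (X : PotentialOutcomes E 𝓦 𝓜)
    (a : Fin 2) (w : 𝓦) (m : 𝓜) (y : ℝ) :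
    (X.randomize p).observedLaw a w m y = p a * X.singleWorldLaw a w m y := by
  simp only [CausalModel.observedLaw, and_comm (a := _ = a)]
  exact pr_prodLaw_and_fst_eq p X.law _ a

theorem crossWorldMean_randomize {p : Fin 2 → ℝ} (hp : ∑ a, p a = 1)
    (X : PotentialOutcomes E 𝓦 𝓜) : (X.randomize p).crossWorldMean = X.crossWorldMean :=
  expec_prodLaw_snd hp X.law fun e => X.Yc 1 (X.Mc 0 e) e

end PotentialOutcomes

variable [Fintype 𝓦] [Fintype 𝓜] [Nonempty 𝓦] [Nonempty 𝓜]

/-- Potential outcomes on independent uniform triples `(w, u, v)`: `W^a = w`, `M^0 = σ u`,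
`M^1 = v`, `Y^{0,m} = 0` and `Y^{1,m} = 1{u = m}`. The permutation `σ` tunes the dependence
between `M^0` and `Y^{1,m}` without affecting either world alone. -/
def permutedMediator (σ : Equiv.Perm 𝓜) : PotentialOutcomes (𝓦 × 𝓜 × 𝓜) 𝓦 𝓜 where
  law := prodLaw (uniformLaw 𝓦) (prodLaw (uniformLaw 𝓜) (uniformLaw 𝓜))
  Wc _ x := x.1
  Mc := ![fun x => σ x.2.1, fun x => x.2.2]
  Yc := ![fun _ _ => 0, fun m x => if x.2.1 = m then 1 else 0]

theorem singleWorldLaw_permutedMediator (σ : Equiv.Perm 𝓜) :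
    (permutedMediator (𝓦 := 𝓦) σ).singleWorldLaw
      = (permutedMediator (𝓦 := 𝓦) 1).singleWorldLaw := by
  funext a w m y
  fin_cases a
  · exact (pr_reindex ((Equiv.refl 𝓦).prodCongr (σ.prodCongr (Equiv.refl 𝓜)))
      (permutedMediator 1).law fun x => x.1 = w ∧ x.2.1 = m ∧ 0 = y).symm
  · rfl

theorem law_permutedMediator_pos (σ : Equiv.Perm 𝓜) (x : 𝓦 × 𝓜 × 𝓜) :
    0 < (permutedMediator σ).law x :=
  mul_pos (uniformLaw_pos _) (mul_pos (uniformLaw_pos _) (uniformLaw_pos _))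

theorem law_permutedMediator_mem_stdSimplex (σ : Equiv.Perm 𝓜) :
    (permutedMediator (𝓦 := 𝓦) σ).law ∈ stdSimplex ℝ (𝓦 × 𝓜 × 𝓜) :=
  prodLaw_mem_stdSimplex uniformLaw_mem_stdSimplex
    (prodLaw_mem_stdSimplex uniformLaw_mem_stdSimplex uniformLaw_mem_stdSimplex)

theorem exists_permutedMediator_Mc_eq_and_Wc_eq (σ : Equiv.Perm 𝓜) (a : Fin 2) (w : 𝓦) (m : 𝓜) :
    ∃ x, (permutedMediator σ).Mc a x = m ∧ (permutedMediator σ).Wc a x = w := by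
  refine ⟨(w, σ.symm m, m), ?_, rfl⟩
  fin_cases a <;> simp [permutedMediator]

theorem condIndepYcMc_permutedMediator (σ : Equiv.Perm 𝓜) :
    (permutedMediator (𝓦 := 𝓦) σ).CondIndepYcMc := by
  intro a m y mv w
  have uniform_sum : ∑ u, uniformLaw 𝓜 u = 1 := uniformLaw_mem_stdSimplex.2
  have pair_sum : ∑ x, prodLaw (uniformLaw 𝓜) (uniformLaw 𝓜) x = 1 :=
    (prodLaw_mem_stdSimplex uniformLaw_mem_stdSimplex uniformLaw_mem_stdSimplex).2
  simp only [permutedMediator, cpr_prodLaw_fst_eq pair_sum (uniformLaw_pos w).ne']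
  fin_cases a
  · by_cases hy : 0 = y <;> simp [pr, hy, pair_sum]
  · exact pr_prodLaw_fst_and_snd uniform_sum uniform_sum
      (fun u => (if u = m then (1 : ℝ) else 0) = y) (· = mv)

theorem isM1_randomize_permutedMediator (σ : Equiv.Perm 𝓜) :
    ((permutedMediator (𝓦 := 𝓦) σ).randomize (uniformLaw (Fin 2))).IsM1 := by
  have law_pos := law_permutedMediator_pos (𝓦 := 𝓦) σ
  refine PotentialOutcomes.isM1_randomize uniformLaw_pos uniformLaw_mem_stdSimplex.2
    (law_permutedMediator_mem_stdSimplex σ) (fun a w => pr_pos law_pos ?_)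
    (fun a w m => cpr_pos law_pos ?_) (condIndepYcMc_permutedMediator σ)
  · exact ⟨(w, Classical.arbitrary _), rfl⟩
  · exact exists_permutedMediator_Mc_eq_and_Wc_eq σ a w m

theorem crossWorldMean_permutedMediator_eq_one_iff (σ : Equiv.Perm 𝓜) :
    (permutedMediator (𝓦 := 𝓦) σ).crossWorldMean = 1 ↔ σ = 1 := by
  calc (permutedMediator (𝓦 := 𝓦) σ).crossWorldMean = 1
      ↔ pr (permutedMediator (𝓦 := 𝓦) σ).law (fun x => x.2.1 = σ x.2.1) = 1 := by
        rw [← expec_indicator]; rfl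
    _ ↔ ∀ x : 𝓦 × 𝓜 × 𝓜, x.2.1 = σ x.2.1 :=
        pr_eq_one_iff (law_permutedMediator_pos σ) (law_permutedMediator_mem_stdSimplex σ).2
    _ ↔ σ = 1 := by simp [Equiv.ext_iff, eq_comm]

end CausalModels

theorem nde_not_identified_under_M1_general (𝓦 𝓜 : Type) [Finite 𝓦] [Nonempty 𝓦] [Finite 𝓜]
    [Nontrivial 𝓜] :
    ∃ (n : ℕ) (X₁ X₂ : CausalModel (Fin n) 𝓦 𝓜), X₁.IsM1 ∧ X₂.IsM1 ∧
      X₁.observedLaw = X₂.observedLaw ∧ X₁.crossWorldMean ≠ X₂.crossWorldMean := by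
  have := Fintype.ofFinite 𝓦
  have := Fintype.ofFinite 𝓜
  obtain ⟨σ, hσ⟩ := exists_ne (1 : Equiv.Perm 𝓜)
  let e := (Fintype.equivFin (Fin 2 × 𝓦 × 𝓜 × 𝓜)).symm
  let X (τ : Equiv.Perm 𝓜) := (permutedMediator (𝓦 := 𝓦) τ).randomize (uniformLaw (Fin 2))
  have mean_eq_one_iff (τ : Equiv.Perm 𝓜) : ((X τ).reindex e).crossWorldMean = 1 ↔ τ = 1 := by
    rw [CausalModel.crossWorldMean_reindex,
      PotentialOutcomes.crossWorldMean_randomize uniformLaw_mem_stdSimplex.2,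
      crossWorldMean_permutedMediator_eq_one_iff]
  refine ⟨_, (X 1).reindex e, (X σ).reindex e, (isM1_randomize_permutedMediator 1).reindex e,
    (isM1_randomize_permutedMediator σ).reindex e, ?_, fun h => ?_⟩
  · funext a w m y
    simp only [X, CausalModel.observedLaw_reindex, PotentialOutcomes.observedLaw_randomize,
      singleWorldLaw_permutedMediator σ]
  · exact hσ ((mean_eq_one_iff σ).1 (h ▸ (mean_eq_one_iff 1).2 rfl))

/-- Non-identification of the natural direct effect under model
`M1`: there exist two tuples of random variables, each on a finite probability
space and each satisfying consistency, positivity, A1.1' and A1.2, inducing the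
same observed-data distribution of `(A, W, M, Y)` but different values of
`E[Y^{1,M^0}]` (with `Y^{1,M^0} := Σ_m 1{M^0=m}·Y^{1,m}`). -/
theorem nde_not_identified_under_M1 :
    ∃ (nW nM n₁ n₂ : ℕ)
      (P₁ : Fin n₁ → ℝ) (A₁ : Fin n₁ → Fin 2) (W₁ : Fin n₁ → Fin nW)
      (M₁ : Fin n₁ → Fin nM) (Y₁ : Fin n₁ → ℝ)
      (Wc₁ : Fin 2 → Fin n₁ → Fin nW) (Mc₁ : Fin 2 → Fin n₁ → Fin nM)
      (Yc₁ : Fin 2 → Fin nM → Fin n₁ → ℝ)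
      (P₂ : Fin n₂ → ℝ) (A₂ : Fin n₂ → Fin 2) (W₂ : Fin n₂ → Fin nW)
      (M₂ : Fin n₂ → Fin nM) (Y₂ : Fin n₂ → ℝ)
      (Wc₂ : Fin 2 → Fin n₂ → Fin nW) (Mc₂ : Fin 2 → Fin n₂ → Fin nM)
      (Yc₂ : Fin 2 → Fin nM → Fin n₂ → ℝ),
      -- model 1 is a valid probability space satisfying the assumptions of M1
      ((∀ ω, 0 ≤ P₁ ω) ∧ (∑ ω, P₁ ω) = 1
        ∧ (∀ (a : Fin 2) (ω : Fin n₁), A₁ ω = a → Wc₁ a ω = W₁ ω)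
        ∧ (∀ (a : Fin 2) (ω : Fin n₁), A₁ ω = a → Mc₁ a ω = M₁ ω)
        ∧ (∀ (a : Fin 2) (m : Fin nM) (ω : Fin n₁),
            A₁ ω = a → M₁ ω = m → Yc₁ a m ω = Y₁ ω)
        ∧ (∀ a : Fin 2, 0 < pr P₁ (fun ω => A₁ ω = a))
        ∧ (∀ (a : Fin 2) (w : Fin nW),
            0 < cpr P₁ (fun ω => W₁ ω = w) (fun ω => A₁ ω = a))
        ∧ (∀ (a : Fin 2) (w : Fin nW) (m : Fin nM),
            0 < cpr P₁ (fun ω => M₁ ω = m) (fun ω => W₁ ω = w ∧ A₁ ω = a))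
        ∧ (∀ (a : Fin 2) (w : Fin nW) (mv : Fin nM) (yv : Fin nM → ℝ) (a' : Fin 2),
            pr P₁ (fun ω => Wc₁ a ω = w ∧ Mc₁ a ω = mv ∧ (∀ m, Yc₁ a m ω = yv m) ∧ A₁ ω = a')
              = pr P₁ (fun ω => Wc₁ a ω = w ∧ Mc₁ a ω = mv ∧ (∀ m, Yc₁ a m ω = yv m))
                  * pr P₁ (fun ω => A₁ ω = a'))
        ∧ (∀ (a : Fin 2) (m : Fin nM) (y : ℝ) (mv : Fin nM) (w : Fin nW),
            cpr P₁ (fun ω => Yc₁ a m ω = y ∧ Mc₁ a ω = mv) (fun ω => W₁ ω = w ∧ A₁ ω = a)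
              = cpr P₁ (fun ω => Yc₁ a m ω = y) (fun ω => W₁ ω = w ∧ A₁ ω = a)
                  * cpr P₁ (fun ω => Mc₁ a ω = mv) (fun ω => W₁ ω = w ∧ A₁ ω = a)))
      -- model 2 is a valid probability space satisfying the assumptions of M1
      ∧ ((∀ ω, 0 ≤ P₂ ω) ∧ (∑ ω, P₂ ω) = 1
        ∧ (∀ (a : Fin 2) (ω : Fin n₂), A₂ ω = a → Wc₂ a ω = W₂ ω)
        ∧ (∀ (a : Fin 2) (ω : Fin n₂), A₂ ω = a → Mc₂ a ω = M₂ ω)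
        ∧ (∀ (a : Fin 2) (m : Fin nM) (ω : Fin n₂),
            A₂ ω = a → M₂ ω = m → Yc₂ a m ω = Y₂ ω)
        ∧ (∀ a : Fin 2, 0 < pr P₂ (fun ω => A₂ ω = a))
        ∧ (∀ (a : Fin 2) (w : Fin nW),
            0 < cpr P₂ (fun ω => W₂ ω = w) (fun ω => A₂ ω = a))
        ∧ (∀ (a : Fin 2) (w : Fin nW) (m : Fin nM),
            0 < cpr P₂ (fun ω => M₂ ω = m) (fun ω => W₂ ω = w ∧ A₂ ω = a))
        ∧ (∀ (a : Fin 2) (w : Fin nW) (mv : Fin nM) (yv : Fin nM → ℝ) (a' : Fin 2),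
            pr P₂ (fun ω => Wc₂ a ω = w ∧ Mc₂ a ω = mv ∧ (∀ m, Yc₂ a m ω = yv m) ∧ A₂ ω = a')
              = pr P₂ (fun ω => Wc₂ a ω = w ∧ Mc₂ a ω = mv ∧ (∀ m, Yc₂ a m ω = yv m))
                  * pr P₂ (fun ω => A₂ ω = a'))
        ∧ (∀ (a : Fin 2) (m : Fin nM) (y : ℝ) (mv : Fin nM) (w : Fin nW),
            cpr P₂ (fun ω => Yc₂ a m ω = y ∧ Mc₂ a ω = mv) (fun ω => W₂ ω = w ∧ A₂ ω = a)
              = cpr P₂ (fun ω => Yc₂ a m ω = y) (fun ω => W₂ ω = w ∧ A₂ ω = a)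
                  * cpr P₂ (fun ω => Mc₂ a ω = mv) (fun ω => W₂ ω = w ∧ A₂ ω = a)))
      -- the two induced observed-data distributions are identical
      ∧ (∀ (a : Fin 2) (w : Fin nW) (m : Fin nM) (y : ℝ),
          pr P₁ (fun ω => A₁ ω = a ∧ W₁ ω = w ∧ M₁ ω = m ∧ Y₁ ω = y)
            = pr P₂ (fun ω => A₂ ω = a ∧ W₂ ω = w ∧ M₂ ω = m ∧ Y₂ ω = y))
      -- but the two values of E[Y^{1,M^0}] differ
      ∧ expec P₁ (fun ω => ∑ m, if Mc₁ 0 ω = m then Yc₁ 1 m ω else 0)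
          ≠ expec P₂ (fun ω => ∑ m, if Mc₂ 0 ω = m then Yc₂ 1 m ω else 0) := by
  obtain ⟨n, X₁, X₂, h₁, h₂, hobs, hmean⟩ := nde_not_identified_under_M1_general (Fin 2) (Fin 2)
  refine ⟨2, 2, n, n, X₁.law, X₁.A, X₁.W, X₁.M, X₁.Y, X₁.Wc, X₁.Mc, X₁.Yc,
    X₂.law, X₂.A, X₂.W, X₂.M, X₂.Y, X₂.Wc, X₂.Mc, X₂.Yc,
    ⟨h₁.law_nonneg, h₁.sum_law, h₁.consistent_W, h₁.consistent_M, h₁.consistent_Y, h₁.pr_A_pos,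
      h₁.cpr_W_pos, h₁.cpr_M_pos, h₁.indep_A, h₁.condIndep_Yc_Mc⟩,
    ⟨h₂.law_nonneg, h₂.sum_law, h₂.consistent_W, h₂.consistent_M, h₂.consistent_Y, h₂.pr_A_pos,
      h₂.cpr_W_pos, h₂.cpr_M_pos, h₂.indep_A, h₂.condIndep_Yc_Mc⟩,
    fun a w m y => congrFun (congrFun₃ hobs a w m) y, ?_⟩
  simpa only [Finset.sum_ite_eq, Finset.mem_univ, if_true] using! hmean
end
end
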